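/- Let x ≠ y be real numbers, let ξₙ → ∞ be a sequence of positive reals, and let aₙ, bₙ ∈ ℤ + 1/2 satisfy (aₙ − 2√ξₙ)/ξₙ^{1/6} → x and (bₙ − 2√ξₙ)/ξₙ^{1/6} → y. Then ξₙ^{1/6} · K_Bessel(aₙ, bₙ; ξₙ) → K_Airy(x, y) as n → ∞. -/

import Mathlib

open Filter Topology

/-- The discrete sine kernel `K_sin(x; φ)`, for `x : ℤ`. -/
noncomputable def Ksin (x : ℤ) (φ : ℝ) : ℝ :=
  if x = 0 then φ / Real.pi else Real.sin (φ * x) / (Real.pi * x)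

/-- The discrete Bessel kernel `K_Bessel(x, y; ξ)`, where the half-integers
`x = a + 1/2`, `y = b + 1/2` are encoded by the integers `a`, `b`, so that
`z^{x+1/2} = z^{a+1}` and `w^{-y+1/2} = w^{-b}`. -/
noncomputable def besselKernel (a b : ℤ) (ξ : ℝ) : ℂ :=
  (2 * Real.pi * Complex.I)⁻¹ ^ 2 *
    ∮ z in C((0 : ℂ), 2), ∮ w in C((0 : ℂ), 1/2),
      Complex.exp ((Real.sqrt ξ : ℂ) * (z - z⁻¹ - w + w⁻¹)) /
        ((z - w) * z ^ (a + 1) * w ^ (-b))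

/-- The Airy function `Ai(x) = (1/π) ∫₀^∞ cos(s³/3 + sx) ds`, the improper
integral being the limit of `∫₀^T` as `T → ∞`. -/
noncomputable def Ai (x : ℝ) : ℝ :=
  (1 / Real.pi) *
    limUnder atTop fun T : ℝ => ∫ s in (0 : ℝ)..T, Real.cos (s ^ 3 / 3 + s * x)

/-- The Airy kernel `K_Airy(x, y) = (Ai(x) Ai'(y) - Ai'(x) Ai(y))/(x - y)` for
`x ≠ y`, and `K_Airy(y, y) = Ai'(y)² - y Ai(y)²` on the diagonal. -/
noncomputable def KAiry (x y : ℝ) : ℝ :=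
  if x = y then (deriv Ai y) ^ 2 - y * (Ai y) ^ 2
  else (Ai x * deriv Ai y - deriv Ai x * Ai y) / (x - y)

/-- The integrand of the contour representation of the Airy function. -/
noncomputable def airyF (x : ℝ) (w : ℂ) : ℂ := Complex.exp (w ^ 3 / 3 - x * w)

/-- A point of the contour `Re w = 1`. -/
noncomputable def ptL (u : ℝ) : ℂ := 1 + u * Complex.I

lemma continuous_ptL : Continuous ptL := by unfold ptL; fun_prop

lemma norm_airyF (x : ℝ) (t u : ℝ) :
    ‖airyF x (t + u * Complex.I)‖ = Real.exp (t ^ 3 / 3 - t * u ^ 2 - x * t) := by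
  unfold airyF
  rw [Complex.norm_exp]
  congr 1
  have h : ((t : ℂ) + u * Complex.I) ^ 3 / 3 - x * (t + u * Complex.I)
      = ((t ^ 3 / 3 - t * u ^ 2 - x * t : ℝ) : ℂ)
        + ((t ^ 2 * u - u ^ 3 / 3 - x * u : ℝ) : ℂ) * Complex.I := by
    push_cast
    ring_nf
    rw [Complex.I_sq, show Complex.I ^ 3 = -Complex.I by rw [pow_succ, Complex.I_sq]; ring]
    ring
  rw [h, Complex.add_re, Complex.re_ofReal_mul, Complex.I_re, Complex.ofReal_re]
  ring

lemma norm_airyF_ptL (x u : ℝ) :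
    ‖airyF x (ptL u)‖ = Real.exp (1 / 3 - x) * Real.exp (-1 * u ^ 2) := by
  have := norm_airyF x 1 u
  unfold ptL
  push_cast at this
  rw [this, ← Real.exp_add]
  congr 1; ring

lemma norm_ptL_le (u : ℝ) : ‖ptL u‖ ≤ 1 + |u| := by
  unfold ptL
  refine (norm_add_le _ _).trans ?_
  simp

lemma continuous_airyF (x : ℝ) : Continuous (airyF x) := by unfold airyF; fun_prop

lemma integrable_gauss (c : ℝ) (hc : 0 < c) :
    MeasureTheory.Integrable (fun u : ℝ => (1 + |u|) * Real.exp (-c * u ^ 2)) := by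
  have h1 := integrable_exp_neg_mul_sq hc
  have h2 := (integrable_mul_exp_neg_mul_sq hc).norm
  refine (h1.add h2).congr (Eventually.of_forall fun u => ?_)
  simp
  ring

lemma integrable_airyF (x : ℝ) : MeasureTheory.Integrable (fun u => airyF x (ptL u)) := by
  refine ((integrable_exp_neg_mul_sq one_pos).const_mul (Real.exp (1 / 3 - x))).mono'
    ((continuous_airyF x).comp continuous_ptL).aestronglyMeasurable
    (Eventually.of_forall fun u => ?_)
  rw [norm_airyF_ptL]

lemma hasDerivAt_airy (x : ℝ) :
    HasDerivAt (fun x : ℝ => ∫ u, airyF x (ptL u)) (∫ u, -ptL u * airyF x (ptL u)) x := by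
  refine (hasDerivAt_integral_of_dominated_loc_of_deriv_le (s := Set.Ioo (x - 1) (x + 1))
    (F' := fun x u => -ptL u * airyF x (ptL u))
    (bound := fun u => Real.exp (1 / 3 - (x - 1)) * ((1 + |u|) * Real.exp (-1 * u ^ 2)))
    (Ioo_mem_nhds (by linarith) (by linarith)) ?_ (integrable_airyF x) ?_ ?_ ?_ ?_).2
  · exact Eventually.of_forall fun y =>
      ((continuous_airyF y).comp continuous_ptL).aestronglyMeasurable
  · exact (continuous_ptL.neg.mul
      ((continuous_airyF x).comp continuous_ptL)).aestronglyMeasurable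
  · refine Eventually.of_forall fun u y hy => ?_
    rw [norm_mul, norm_neg, norm_airyF_ptL]
    have h1 := norm_ptL_le u
    have h2 : Real.exp (1 / 3 - y) ≤ Real.exp (1 / 3 - (x - 1)) :=
      Real.exp_le_exp.2 (by linarith [hy.1])
    calc ‖ptL u‖ * (Real.exp (1 / 3 - y) * Real.exp (-1 * u ^ 2))
        ≤ (1 + |u|) * (Real.exp (1 / 3 - (x - 1)) * Real.exp (-1 * u ^ 2)) := by gcongr
      _ = _ := by ring
  · exact (integrable_gauss 1 one_pos).const_mul _
  · refine Eventually.of_forall fun u y _ => ?_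
    unfold airyF
    have h : HasDerivAt (fun y : ℝ => ptL u ^ 3 / 3 - (y : ℂ) * ptL u) (-(1 * ptL u)) y := by
      exact ((Complex.ofRealCLM.hasDerivAt (x := y)).mul_const (ptL u)).const_sub _
    have := h.cexp
    simp only [one_mul] at this
    rw [mul_comm] at this
    exact this

lemma airy_edge (x : ℝ) (σ : ℝ) (hσ : σ ^ 2 = 1) :
    Tendsto (fun T : ℝ => ∫ t in (0 : ℝ)..1, airyF x (t + ((σ * T : ℝ) : ℂ) * Complex.I))
      atTop (𝓝 0) := by
  have : (0 : ℂ) = ∫ t in (0 : ℝ)..1, (0 : ℂ) := by simp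
  rw [this]
  refine intervalIntegral.tendsto_integral_filter_of_dominated_convergence
    (fun _ => Real.exp (1 + |x|)) ?_ ?_ ?_ ?_
  · refine Eventually.of_forall fun T => ?_
    exact ((continuous_airyF x).comp (by fun_prop)).aestronglyMeasurable
  · refine Eventually.of_forall fun T => Eventually.of_forall fun t ht => ?_
    rw [Set.uIoc_of_le zero_le_one] at ht
    rw [norm_airyF]
    apply Real.exp_le_exp.2
    have h1 : t ^ 3 ≤ 1 := pow_le_one₀ ht.1.le ht.2
    have h2 : 0 ≤ t * (σ * T) ^ 2 := mul_nonneg ht.1.le (sq_nonneg _)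
    have h3 : -(x * t) ≤ |x| := by
      calc -(x * t) ≤ |x * t| := neg_le_abs _
        _ = |x| * t := by rw [abs_mul, abs_of_pos ht.1]
        _ ≤ |x| * 1 := by gcongr; exact ht.2
        _ = |x| := mul_one _
    linarith
  · exact intervalIntegrable_const
  · refine Eventually.of_forall fun t ht => ?_
    rw [Set.uIoc_of_le zero_le_one] at ht
    rw [tendsto_zero_iff_norm_tendsto_zero]
    simp_rw [norm_airyF]
    refine Real.tendsto_exp_atBot.comp ?_
    have h2 : Tendsto (fun T : ℝ => t * T ^ 2) atTop atTop :=
      (tendsto_pow_atTop two_ne_zero).const_mul_atTop ht.1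
    have h3 := tendsto_atBot_add_const_left atTop (t ^ 3 / 3 - x * t) (tendsto_neg_atTop_atBot.comp h2)
    refine h3.congr fun T => ?_
    simp only [Function.comp]
    rw [mul_pow, hσ]; ring

lemma airy_rect (x T : ℝ) :
    (∫ u in (-T)..T, airyF x (u * Complex.I)) = (∫ u in (-T)..T, airyF x (ptL u))
      - Complex.I * ((∫ t in (0 : ℝ)..1, airyF x (t + ((-1 * T : ℝ) : ℂ) * Complex.I))
        - ∫ t in (0 : ℝ)..1, airyF x (t + ((1 * T : ℝ) : ℂ) * Complex.I)) := by
  have h := Complex.integral_boundary_rect_eq_zero_of_differentiableOn (airyF x)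
    (⟨0, -T⟩ : ℂ) (⟨1, T⟩ : ℂ)
    (by unfold airyF; fun_prop)
  simp only [smul_eq_mul, Complex.ofReal_zero, zero_add, Complex.ofReal_one] at h
  unfold ptL
  simp only [neg_one_mul, one_mul]
  set A := ∫ t in (0 : ℝ)..1, airyF x (t + ((-T : ℝ) : ℂ) * Complex.I)
  set B := ∫ t in (0 : ℝ)..1, airyF x (t + (T : ℂ) * Complex.I)
  set P := ∫ u in (-T)..T, airyF x (1 + u * Complex.I)
  set Q := ∫ u in (-T)..T, airyF x (u * Complex.I)
  linear_combination Complex.I * h + (Q - P) * Complex.I_mul_I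

lemma airy_cos (x T : ℝ) :
    (∫ u in (-T)..T, airyF x (u * Complex.I)) =
      ((2 * ∫ s in (0 : ℝ)..T, Real.cos (s ^ 3 / 3 + s * x) : ℝ) : ℂ) := by
  have hI : ∀ a b : ℝ, IntervalIntegrable (fun u : ℝ => airyF x (u * Complex.I))
      MeasureTheory.volume a b := fun a b =>
    ((continuous_airyF x).comp (by fun_prop)).intervalIntegrable a b
  rw [← intervalIntegral.integral_add_adjacent_intervals (hI (-T) 0) (hI 0 T)]
  have h1 : (∫ u in (-T)..0, airyF x (u * Complex.I))
      = ∫ u in (0 : ℝ)..T, airyF x (((-u : ℝ) : ℂ) * Complex.I) := by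
    rw [intervalIntegral.integral_comp_neg (fun u : ℝ => airyF x (u * Complex.I))]
    simp
  rw [h1, ← intervalIntegral.integral_add]
  · push_cast
    rw [← intervalIntegral.integral_ofReal, ← intervalIntegral.integral_const_mul]
    refine intervalIntegral.integral_congr fun u _ => ?_
    simp only [airyF, Complex.ofReal_cos, Complex.cos]
    push_cast
    have e1 : ((-(u : ℂ)) * Complex.I) ^ 3 / 3 - x * ((-(u : ℂ)) * Complex.I)
        = (u ^ 3 / 3 + u * x) * Complex.I := by
      rw [mul_pow, pow_succ Complex.I, Complex.I_sq]; ring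
    have e2 : ((u : ℂ) * Complex.I) ^ 3 / 3 - x * ((u : ℂ) * Complex.I)
        = -(u ^ 3 / 3 + u * x) * Complex.I := by
      rw [mul_pow, pow_succ Complex.I, Complex.I_sq]; ring
    rw [e1, e2]; ring
  · exact ((continuous_airyF x).comp (by fun_prop)).intervalIntegrable _ _
  · exact hI 0 T

lemma airy_tendsto (x : ℝ) :
    Tendsto (fun T : ℝ => ((2 * ∫ s in (0 : ℝ)..T, Real.cos (s ^ 3 / 3 + s * x) : ℝ) : ℂ)) atTop
      (𝓝 (∫ u, airyF x (ptL u))) := by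
  have h1 := MeasureTheory.intervalIntegral_tendsto_integral (integrable_airyF x)
    tendsto_neg_atTop_atBot tendsto_id
  have h2 := h1.sub (((airy_edge x (-1) (by norm_num)).sub
    (airy_edge x 1 (by norm_num))).const_mul Complex.I)
  simp only [sub_zero, mul_zero] at h2
  refine h2.congr fun T => ?_
  rw [← airy_cos, airy_rect]
  rfl

lemma Ai_eq (x : ℝ) : ((Ai x : ℝ) : ℂ) = (1 / (2 * Real.pi) : ℂ) * ∫ u, airyF x (ptL u) := by
  have h := airy_tendsto x
  set A := ∫ u, airyF x (ptL u)
  have hre := (Complex.continuous_re.tendsto A).comp h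
  have him := (Complex.continuous_im.tendsto A).comp h
  simp only [Function.comp_def, Complex.ofReal_re, Complex.ofReal_im] at hre him
  have him0 : A.im = 0 := tendsto_nhds_unique him tendsto_const_nhds
  have hlim : Tendsto (fun T : ℝ => ∫ s in (0 : ℝ)..T, Real.cos (s ^ 3 / 3 + s * x)) atTop
      (𝓝 (A.re / 2)) := by
    refine (hre.div_const 2).congr fun T => ?_
    ring
  unfold Ai
  rw [hlim.limUnder_eq]
  have hA : A = (A.re : ℂ) := Complex.ext (by simp) (by simp [him0])
  rw [hA]
  push_cast
  simp only [Complex.ofReal_re]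
  have : (Real.pi : ℂ) ≠ 0 := by exact_mod_cast Real.pi_ne_zero
  field_simp

lemma deriv_Ai_eq (x : ℝ) :
    ((deriv Ai x : ℝ) : ℂ) = (1 / (2 * Real.pi) : ℂ) * ∫ u, -ptL u * airyF x (ptL u) := by
  have h : HasDerivAt (fun x : ℝ => ((Ai x : ℝ) : ℂ))
      ((1 / (2 * Real.pi) : ℂ) * ∫ u, -ptL u * airyF x (ptL u)) x := by
    have := (hasDerivAt_airy x).const_mul (1 / (2 * Real.pi) : ℂ)
    simp only [Ai_eq]
    exact this
  have h2 : HasDerivAt Ai (Complex.reCLM ((1 / (2 * Real.pi) : ℂ) * ∫ u, -ptL u * airyF x (ptL u))) x := by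
    have := (Complex.reCLM.hasFDerivAt (x := ((Ai x : ℝ) : ℂ))).comp_hasDerivAt x h
    simpa [Function.comp_def] using this
  have h3 := h2.ofReal_comp
  rw [h2.deriv]
  exact h3.unique h

/-- `2πi` times the Bessel function `J_N(2s)`, as a contour integral. -/
noncomputable def bJ (N : ℤ) (s : ℝ) : ℂ :=
  ∮ z in C((0 : ℂ), 2), Complex.exp (s * (z - z⁻¹)) * z ^ (-N - 1)

lemma bJ_radius (N : ℤ) (s r : ℝ) (hr : 0 < r) :
    bJ N s = ∮ z in C((0 : ℂ), r), Complex.exp (s * (z - z⁻¹)) * z ^ (-N - 1) := by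
  have key : ∀ r R : ℝ, 0 < r → r ≤ R →
      (∮ z in C((0 : ℂ), R), Complex.exp (s * (z - z⁻¹)) * z ^ (-N - 1))
        = ∮ z in C((0 : ℂ), r), Complex.exp (s * (z - z⁻¹)) * z ^ (-N - 1) := by
    intro r R hr hrR
    have hd : ∀ z : ℂ, z ≠ 0 →
        DifferentiableAt ℂ (fun z : ℂ => Complex.exp (s * (z - z⁻¹)) * z ^ (-N - 1)) z := by
      intro z hz
      have h1 : DifferentiableAt ℂ (fun z : ℂ => z⁻¹) z := differentiableAt_inv hz
      have h2 : DifferentiableAt ℂ (fun z : ℂ => z ^ (-N - 1)) z :=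
        differentiableAt_zpow.2 (Or.inl hz)
      exact (((differentiableAt_id.sub h1).const_mul (s : ℂ)).cexp).mul h2
    refine Complex.circleIntegral_eq_of_differentiable_on_annulus_off_countable hr hrR
      Set.countable_empty ?_ ?_
    · intro z hz
      refine (hd z ?_).continuousAt.continuousWithinAt
      rintro rfl
      exact hz.2 (Metric.mem_ball_self hr)
    · intro z hz
      refine hd z ?_
      rintro rfl
      exact hz.1.2 (Metric.mem_closedBall_self hr.le)
  unfold bJ
  rcases le_total r 2 with h | h
  · exact key r 2 hr h
  · exact (key 2 r two_pos h).symm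

/-- The rescaled integrand. -/
noncomputable def eF (L s : ℝ) (N : ℤ) (u : ℝ) : ℂ :=
  Complex.exp (2 * s * Complex.sinh (ptL u / L) - N * (ptL u / L))

lemma continuous_eF (L s : ℝ) (N : ℤ) : Continuous (eF L s N) := by
  unfold eF
  have := continuous_ptL
  fun_prop

lemma bJ_param (N : ℤ) (s L : ℝ) (hL : 0 < L) :
    L * bJ N s = Complex.I * ∫ u in (-(Real.pi * L))..(Real.pi * L), eF L s N u := by
  rw [bJ_radius N s (Real.exp (1 / L)) (Real.exp_pos _)]
  set f : ℂ → ℂ := fun z => Complex.exp (s * (z - z⁻¹)) * z ^ (-N - 1) with hf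
  set g : ℝ → ℂ := fun θ => Complex.exp (2 * s * Complex.sinh ((1 / L : ℝ) + θ * Complex.I)
      - N * ((1 / L : ℝ) + θ * Complex.I)) with hg
  have hc : ∀ θ : ℝ, circleMap 0 (Real.exp (1 / L)) θ
      = Complex.exp ((1 / L : ℝ) + θ * Complex.I) := by
    intro θ
    rw [circleMap, Complex.exp_add, Complex.ofReal_exp]
    simp
  have h1 : ∀ θ : ℝ, deriv (circleMap 0 (Real.exp (1 / L))) θ • f (circleMap 0 (Real.exp (1 / L)) θ)
      = Complex.I * g θ := by
    intro θ
    rw [deriv_circleMap, hc, hf, hg]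
    simp only
    set ζ : ℂ := (1 / L : ℝ) + θ * Complex.I
    rw [← Complex.exp_neg, ← Complex.exp_int_mul, smul_eq_mul, Complex.sinh]
    calc Complex.exp ζ * Complex.I * (Complex.exp (s * (Complex.exp ζ - Complex.exp (-ζ)))
          * Complex.exp (((-N - 1 : ℤ) : ℂ) * ζ))
        = Complex.I * (Complex.exp (ζ + s * (Complex.exp ζ - Complex.exp (-ζ))
            + ((-N - 1 : ℤ) : ℂ) * ζ)) := by
          rw [Complex.exp_add (ζ + _), Complex.exp_add ζ]; ring
      _ = _ := by
          congr 2
          push_cast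
          ring
  have hper : Function.Periodic g (2 * Real.pi) := by
    intro θ
    have e1 : Complex.I * g (θ + 2 * Real.pi) = Complex.I * g θ := by
      rw [← h1, ← h1, deriv_circleMap, deriv_circleMap, periodic_circleMap]
    exact mul_left_cancel₀ Complex.I_ne_zero e1
  have h2 : (∮ z in C((0 : ℂ), Real.exp (1 / L)), f z) = Complex.I * ∫ θ in (-Real.pi)..Real.pi, g θ := by
    rw [circleIntegral]
    simp_rw [h1]
    rw [intervalIntegral.integral_const_mul]
    congr 1
    have := hper.intervalIntegral_add_eq 0 (-Real.pi)
    rw [zero_add] at this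
    rw [this]
    congr 1
    ring
  rw [h2]
  have h3 : (∫ u in (-(Real.pi * L))..(Real.pi * L), eF L s N u)
      = ∫ u in (-(Real.pi * L))..(Real.pi * L), g (u / L) := by
    refine intervalIntegral.integral_congr fun u _ => ?_
    have : ptL u / L = ((1 / L : ℝ) : ℂ) + ((u / L : ℝ) : ℂ) * Complex.I := by
      unfold ptL; push_cast; ring
    simp only [eF, hg, this]
  rw [h3, intervalIntegral.integral_comp_div _ hL.ne']
  rw [show -(Real.pi * L) / L = -Real.pi by field_simp, show Real.pi * L / L = Real.pi by field_simp]
  rw [Complex.real_smul]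
  ring

lemma sinh_bound (z : ℂ) (hz : ‖z‖ ≤ 1) : ‖Complex.sinh z - z - z ^ 3 / 6‖ ≤ ‖z‖ ^ 4 := by
  have h1 := Complex.exp_bound hz (n := 4) (by norm_num)
  have h2 := Complex.exp_bound (x := -z) (by simpa using hz) (n := 4) (by norm_num)
  rw [norm_neg] at h2
  have e : Complex.sinh z - z - z ^ 3 / 6
      = (1 / 2) * ((Complex.exp z - ∑ m ∈ Finset.range 4, z ^ m / m.factorial)
        - (Complex.exp (-z) - ∑ m ∈ Finset.range 4, (-z) ^ m / m.factorial)) := by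
    simp [Finset.sum_range_succ, Nat.factorial, Complex.sinh]
    ring
  rw [e, norm_mul]
  have h3 := norm_sub_le (Complex.exp z - ∑ m ∈ Finset.range 4, z ^ m / m.factorial)
    (Complex.exp (-z) - ∑ m ∈ Finset.range 4, (-z) ^ m / m.factorial)
  have h4 : ‖(1 / 2 : ℂ)‖ = 1 / 2 := by simp
  rw [h4]
  norm_num [Nat.factorial] at h1 h2
  have h5 : 0 ≤ ‖z‖ ^ 4 := by positivity
  norm_num at h3 ⊢
  linarith

lemma real_sinh_upper (t : ℝ) (h0 : 0 ≤ t) (h1 : t ≤ 1) : Real.sinh t ≤ t + 2 * t ^ 3 := by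
  have h := sinh_bound (t : ℂ) (by simpa [abs_of_nonneg h0] using h1)
  have e : Complex.sinh t - t - (t : ℂ) ^ 3 / 6 = ((Real.sinh t - t - t ^ 3 / 6 : ℝ) : ℂ) := by
    push_cast; ring
  rw [e, Complex.norm_real, Complex.norm_real, Real.norm_eq_abs, Real.norm_eq_abs,
    abs_of_nonneg h0] at h
  have h2 := (abs_le.1 h).2
  have h3 : t ^ 4 ≤ t ^ 3 := pow_le_pow_of_le_one h0 h1 (by norm_num)
  have h4 : 0 ≤ t ^ 3 := by positivity
  linarith

lemma norm_eF_le (L : ℝ) (N : ℤ) (M u : ℝ) (hL : 1 ≤ L) (hu : |u| ≤ Real.pi * L)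
    (hM : -M ≤ ((N : ℝ) - 2 * L ^ 3) / L) :
    ‖eF L (L ^ 3) N u‖ ≤ Real.exp (4 + M) * Real.exp (-(4 / Real.pi ^ 2) * u ^ 2) := by
  have hL0 : 0 < L := by linarith
  unfold eF
  rw [Complex.norm_exp, ← Real.exp_add]
  apply Real.exp_le_exp.2
  have hpt : ptL u / L = ((1 / L : ℝ) : ℂ) + ((u / L : ℝ) : ℂ) * Complex.I := by
    unfold ptL; push_cast; ring
  have hs : (Complex.sinh (ptL u / L)).re = Real.sinh (1 / L) * Real.cos (u / L) := by
    rw [hpt, Complex.sinh_add, Complex.sinh_mul_I, Complex.cosh_mul_I, ← Complex.ofReal_sinh,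
      ← Complex.ofReal_cosh, ← Complex.ofReal_cos, ← Complex.ofReal_sin]
    rw [← mul_assoc, ← Complex.ofReal_mul, ← Complex.ofReal_mul, Complex.add_re,
      Complex.re_ofReal_mul, Complex.I_re, Complex.ofReal_re]
    ring
  have hre : (2 * ((L ^ 3 : ℝ) : ℂ) * Complex.sinh (ptL u / L) - N * (ptL u / L)).re
      = 2 * L ^ 3 * (Real.sinh (1 / L) * Real.cos (u / L)) - N * (1 / L) := by
    rw [Complex.sub_re, show (2 * ((L ^ 3 : ℝ) : ℂ)) = ((2 * L ^ 3 : ℝ) : ℂ) by push_cast; ring,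
      Complex.re_ofReal_mul, hs, show (N : ℂ) = ((N : ℝ) : ℂ) by push_cast; ring,
      Complex.re_ofReal_mul, hpt, Complex.add_re, Complex.re_ofReal_mul, Complex.I_re,
      Complex.ofReal_re]
    ring
  rw [hre]
  have ht0 : 0 ≤ 1 / L := by positivity
  have ht1 : 1 / L ≤ 1 := by rw [div_le_one hL0]; exact hL
  have hup := real_sinh_upper (1 / L) ht0 ht1
  have hlo : 1 / L ≤ Real.sinh (1 / L) := Real.self_le_sinh_iff.2 ht0
  have hcos := Real.cos_le_one_sub_mul_cos_sq (x := u / L) (by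
    rw [abs_div, abs_of_pos hL0, div_le_iff₀ hL0]; exact hu)
  have hsn : 0 ≤ Real.sinh (1 / L) := ht0.trans hlo
  have hq : 0 ≤ 2 / Real.pi ^ 2 * (u / L) ^ 2 := by positivity
  have k1 : Real.sinh (1 / L) * Real.cos (u / L)
      ≤ (1 / L + 2 * (1 / L) ^ 3) - (1 / L) * (2 / Real.pi ^ 2 * (u / L) ^ 2) := by
    calc Real.sinh (1 / L) * Real.cos (u / L)
        ≤ Real.sinh (1 / L) * (1 - 2 / Real.pi ^ 2 * (u / L) ^ 2) :=
          mul_le_mul_of_nonneg_left hcos hsn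
      _ = Real.sinh (1 / L) - Real.sinh (1 / L) * (2 / Real.pi ^ 2 * (u / L) ^ 2) := by ring
      _ ≤ _ := sub_le_sub hup (mul_le_mul_of_nonneg_right hlo hq)
  have k2 := mul_le_mul_of_nonneg_left k1 (show 0 ≤ 2 * L ^ 3 by positivity)
  have k3 : 2 * L ^ 3 * ((1 / L + 2 * (1 / L) ^ 3) - (1 / L) * (2 / Real.pi ^ 2 * (u / L) ^ 2))
      = 2 * L ^ 2 + 4 - 4 / Real.pi ^ 2 * u ^ 2 := by
    have := Real.pi_ne_zero
    field_simp
    ring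
  have k4 : ((N : ℝ) - 2 * L ^ 3) / L = N * (1 / L) - 2 * L ^ 2 := by
    field_simp
  rw [k4] at hM
  linarith

lemma eF_tendsto (L : ℕ → ℝ) (N : ℕ → ℤ) (x : ℝ) (hL : Tendsto L atTop atTop)
    (hN : Tendsto (fun n => ((N n : ℝ) - 2 * L n ^ 3) / L n) atTop (𝓝 x)) (u : ℝ) :
    Tendsto (fun n => eF (L n) (L n ^ 3) (N n) u) atTop (𝓝 (airyF x (ptL u))) := by
  unfold eF airyF
  refine (Complex.continuous_exp.tendsto _).comp ?_
  set p := ptL u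
  have hinv : Tendsto (fun n => (L n)⁻¹) atTop (𝓝 0) := tendsto_inv_atTop_zero.comp hL
  have hsm : Tendsto (fun n => ‖p‖ ^ 4 * (L n)⁻¹) atTop (𝓝 0) := by
    simpa using hinv.const_mul (‖p‖ ^ 4)
  have hA : Tendsto (fun n => (L n : ℂ) ^ 3 * (Complex.sinh (p / L n) - p / L n - (p / L n) ^ 3 / 6))
      atTop (𝓝 0) := by
    refine squeeze_zero_norm' ?_ hsm
    filter_upwards [hL.eventually_ge_atTop (max 1 ‖p‖)] with n hn
    have h1 : 1 ≤ L n := (le_max_left _ _).trans hn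
    have h2 : ‖p‖ ≤ L n := (le_max_right _ _).trans hn
    have h0 : 0 < L n := by linarith
    have hnorm : ‖p / L n‖ = ‖p‖ / L n := by
      rw [norm_div, Complex.norm_real, Real.norm_of_nonneg h0.le]
    have hb := sinh_bound (p / L n) (by rw [hnorm, div_le_one h0]; exact h2)
    rw [norm_mul, norm_pow, Complex.norm_real, Real.norm_of_nonneg h0.le]
    rw [hnorm] at hb
    calc _ ≤ L n ^ 3 * (‖p‖ / L n) ^ 4 := by gcongr
      _ = _ := by field_simp
  have hB : Tendsto (fun n => (((((N n : ℝ) - 2 * L n ^ 3) / L n) : ℝ) : ℂ) * p) atTop (𝓝 (x * p)) :=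
    ((Complex.continuous_ofReal.tendsto x).comp hN).mul_const p
  have hC := ((hA.const_mul 2).add_const (p ^ 3 / 3)).sub hB
  simp only [mul_zero, zero_add] at hC
  refine hC.congr' ?_
  filter_upwards [hL.eventually_gt_atTop 0] with n hn
  have : (L n : ℂ) ≠ 0 := by exact_mod_cast hn.ne'
  push_cast
  field_simp
  ring

lemma main_limit (L : ℕ → ℝ) (N : ℕ → ℤ) (x : ℝ) (hL : Tendsto L atTop atTop)
    (hN : Tendsto (fun n => ((N n : ℝ) - 2 * L n ^ 3) / L n) atTop (𝓝 x))
    (P : ℕ → ℝ → ℂ) (Q : ℝ → ℂ) (K : ℝ) (hP : ∀ n, Continuous (P n))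
    (hPb : ∀ n u, 1 ≤ L n → |u| ≤ Real.pi * L n → ‖P n u‖ ≤ K * (1 + |u|))
    (hPQ : ∀ u, Tendsto (fun n => P n u) atTop (𝓝 (Q u))) :
    Tendsto (fun n => ∫ u in (-(Real.pi * L n))..(Real.pi * L n),
      P n u * eF (L n) (L n ^ 3) (N n) u) atTop (𝓝 (∫ u, Q u * airyF x (ptL u))) := by
  have hpi := Real.pi_pos
  have h1 : ∀ᶠ n in atTop, (∫ u, (Set.Ioc (-(Real.pi * L n)) (Real.pi * L n)).indicator
      (fun u => P n u * eF (L n) (L n ^ 3) (N n) u) u) =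
      ∫ u in (-(Real.pi * L n))..(Real.pi * L n), P n u * eF (L n) (L n ^ 3) (N n) u := by
    filter_upwards [hL.eventually_gt_atTop 0] with n hn
    have : 0 < Real.pi * L n := by positivity
    rw [intervalIntegral.integral_of_le (by linarith),
      MeasureTheory.integral_indicator measurableSet_Ioc]
  refine Tendsto.congr' h1 ?_
  refine MeasureTheory.tendsto_integral_filter_of_dominated_convergence
    (fun u => (K * Real.exp (4 + (1 - x))) * ((1 + |u|) * Real.exp (-(4 / Real.pi ^ 2) * u ^ 2)))
    ?_ ?_ ((integrable_gauss _ (by positivity)).const_mul _) ?_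
  · refine Eventually.of_forall fun n => ?_
    exact (((hP n).mul (continuous_eF _ _ _)).aestronglyMeasurable).indicator measurableSet_Ioc
  · have h2 : ∀ᶠ n in atTop, x - 1 ≤ ((N n : ℝ) - 2 * L n ^ 3) / L n :=
      hN.eventually (Ici_mem_nhds (by linarith))
    have hK : ∀ᶠ n : ℕ in atTop, 0 ≤ K := by
      filter_upwards [hL.eventually_ge_atTop 1] with n hn
      have := hPb n 0 hn (by simp; positivity)
      simp at this
      exact (norm_nonneg _).trans this
    filter_upwards [h2, hK, hL.eventually_ge_atTop 1] with n hn hK hL1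
    refine Eventually.of_forall fun u => ?_
    by_cases hu : u ∈ Set.Ioc (-(Real.pi * L n)) (Real.pi * L n)
    · rw [Set.indicator_of_mem hu, norm_mul]
      have hu' : |u| ≤ Real.pi * L n := abs_le.2 ⟨hu.1.le, hu.2⟩
      calc _ ≤ (K * (1 + |u|)) *
            (Real.exp (4 + (1 - x)) * Real.exp (-(4 / Real.pi ^ 2) * u ^ 2)) :=
            mul_le_mul (hPb n u hL1 hu') (norm_eF_le _ _ _ _ hL1 hu' (by linarith))
              (norm_nonneg _) (by positivity)
        _ = _ := by ring
    · rw [Set.indicator_of_notMem hu, norm_zero]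
      positivity
  · refine Eventually.of_forall fun u => ?_
    refine ((hPQ u).mul (eF_tendsto L N x hL hN u)).congr' ?_
    filter_upwards [hL.eventually_gt_atTop (|u| / Real.pi)] with n hn
    rw [div_lt_iff₀ hpi] at hn
    have := abs_lt.1 hn
    rw [Set.indicator_of_mem]
    constructor <;> nlinarith

lemma bJ_limit (L : ℕ → ℝ) (N : ℕ → ℤ) (x : ℝ) (hL : Tendsto L atTop atTop)
    (hN : Tendsto (fun n => ((N n : ℝ) - 2 * L n ^ 3) / L n) atTop (𝓝 x)) :
    Tendsto (fun n => (L n : ℂ) * ((2 * Real.pi * Complex.I)⁻¹ * bJ (N n) (L n ^ 3))) atTop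
      (𝓝 ((Ai x : ℝ) : ℂ)) := by
  have h := main_limit L N x hL hN (fun _ _ => 1) (fun _ => 1) 1 (fun _ => continuous_const)
    (fun n u _ _ => by simp) (fun u => tendsto_const_nhds)
  rw [Ai_eq]
  simp only [one_mul] at h
  refine (h.const_mul (1 / (2 * Real.pi) : ℂ)).congr' ?_
  filter_upwards [hL.eventually_gt_atTop 0] with n hn
  have e := bJ_param (N n) (L n ^ 3) (L n) hn
  have : (Real.pi : ℂ) ≠ 0 := by exact_mod_cast Real.pi_ne_zero
  rw [mul_left_comm, e]
  field_simp

lemma dbJ_limit (L : ℕ → ℝ) (N : ℕ → ℤ) (x : ℝ) (hL : Tendsto L atTop atTop)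
    (hN : Tendsto (fun n => ((N n : ℝ) - 2 * L n ^ 3) / L n) atTop (𝓝 x)) :
    Tendsto (fun n => (L n : ℂ) ^ 2 * ((2 * Real.pi * Complex.I)⁻¹ *
        (bJ (N n + 1) (L n ^ 3) - bJ (N n) (L n ^ 3)))) atTop
      (𝓝 ((deriv Ai x : ℝ) : ℂ)) := by
  have h := main_limit L N x hL hN (fun n u => L n * (Complex.exp (-(ptL u / L n)) - 1))
    (fun u => -ptL u) (Real.exp (1 + Real.pi))
    (fun n => by have := continuous_ptL; fun_prop) ?_ ?_
  · rw [deriv_Ai_eq]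
    refine (h.const_mul (1 / (2 * Real.pi) : ℂ)).congr' ?_
    filter_upwards [hL.eventually_gt_atTop 0] with n hn
    have e1 := bJ_param (N n) (L n ^ 3) (L n) hn
    have e2 := bJ_param (N n + 1) (L n ^ 3) (L n) hn
    have : (Real.pi : ℂ) ≠ 0 := by exact_mod_cast Real.pi_ne_zero
    have e3 : (∫ u in (-(Real.pi * L n))..(Real.pi * L n),
        L n * (Complex.exp (-(ptL u / L n)) - 1) * eF (L n) (L n ^ 3) (N n) u)
        = L n * ((∫ u in (-(Real.pi * L n))..(Real.pi * L n), eF (L n) (L n ^ 3) (N n + 1) u)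
          - ∫ u in (-(Real.pi * L n))..(Real.pi * L n), eF (L n) (L n ^ 3) (N n) u) := by
      rw [← intervalIntegral.integral_sub ((continuous_eF _ _ _).intervalIntegrable _ _)
        ((continuous_eF _ _ _).intervalIntegrable _ _), ← intervalIntegral.integral_const_mul]
      refine intervalIntegral.integral_congr fun u _ => ?_
      have : eF (L n) (L n ^ 3) (N n + 1) u
          = Complex.exp (-(ptL u / L n)) * eF (L n) (L n ^ 3) (N n) u := by
        unfold eF
        rw [← Complex.exp_add]
        congr 1
        push_cast
        ring
      rw [this]; ring
    rw [e3]
    rw [show (L n : ℂ) ^ 2 * ((2 * Real.pi * Complex.I)⁻¹ *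
        (bJ (N n + 1) (L n ^ 3) - bJ (N n) (L n ^ 3)))
        = (2 * Real.pi * Complex.I)⁻¹ * (L n * ((L n * bJ (N n + 1) (L n ^ 3))
          - L n * bJ (N n) (L n ^ 3))) by ring, e1, e2]
    field_simp
  · intro n u h1 hu
    have h0 : 0 < L n := by linarith
    have hnorm : ‖ptL u / L n‖ = ‖ptL u‖ / L n := by
      rw [norm_div, Complex.norm_real, Real.norm_of_nonneg h0.le]
    have hle : ‖ptL u‖ / L n ≤ 1 + Real.pi := by
      rw [div_le_iff₀ h0]
      have := norm_ptL_le u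
      nlinarith
    have hb := Complex.norm_exp_sub_sum_le_norm_mul_exp (-(ptL u / L n)) 1
    simp only [Finset.range_one, Finset.sum_singleton, pow_zero, Nat.factorial_zero, Nat.cast_one,
      div_one, norm_neg, pow_one, hnorm] at hb
    rw [norm_mul, Complex.norm_real, Real.norm_of_nonneg h0.le]
    calc L n * ‖Complex.exp (-(ptL u / L n)) - 1‖
        ≤ L n * (‖ptL u‖ / L n * Real.exp (‖ptL u‖ / L n)) := by gcongr
      _ = ‖ptL u‖ * Real.exp (‖ptL u‖ / L n) := by field_simp
      _ ≤ (1 + |u|) * Real.exp (1 + Real.pi) := by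
          gcongr
          exact norm_ptL_le u
      _ = _ := by ring
  · intro u
    have hd : HasDerivAt (fun t : ℝ => Complex.exp (-(ptL u * t))) (-ptL u) 0 := by
      have h1 : HasDerivAt (fun t : ℝ => -(ptL u * (t : ℂ))) (-(ptL u * 1)) 0 :=
        ((Complex.ofRealCLM.hasDerivAt (x := (0 : ℝ))).const_mul (ptL u)).neg
      simpa using h1.cexp
    have hs := hd.tendsto_slope_zero_right
    have hinv : Tendsto (fun n => (L n)⁻¹) atTop (𝓝[>] 0) := tendsto_inv_atTop_nhdsGT_zero.comp hL
    refine (hs.comp hinv).congr fun n => ?_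
    simp [div_eq_mul_inv]

/-- Swapping two circle integrals of a function continuous on the product of the circles. -/
lemma circle_swap (f : ℂ → ℂ → ℂ) (R r : ℝ)
    (hf : Continuous fun p : ℝ × ℝ => f (circleMap 0 R p.1) (circleMap 0 r p.2)) :
    (∮ z in C((0 : ℂ), R), ∮ w in C((0 : ℂ), r), f z w)
      = ∮ w in C((0 : ℂ), r), ∮ z in C((0 : ℂ), R), f z w := by
  have h2pi : (0 : ℝ) ≤ 2 * Real.pi := by positivity
  simp only [circleIntegral, deriv_circleMap, smul_eq_mul]
  simp_rw [← intervalIntegral.integral_const_mul]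
  simp only [intervalIntegral.integral_of_le h2pi]
  rw [MeasureTheory.integral_integral_swap]
  · refine MeasureTheory.integral_congr_ae (Eventually.of_forall fun φ => ?_)
    refine MeasureTheory.integral_congr_ae (Eventually.of_forall fun θ => ?_)
    simp only
    ring
  · rw [MeasureTheory.Measure.prod_restrict]
    have hc : Continuous (Function.uncurry fun θ φ : ℝ => circleMap 0 R θ * Complex.I *
        (circleMap 0 r φ * Complex.I * f (circleMap 0 R θ) (circleMap 0 r φ))) := by
      have h1 := (continuous_circleMap 0 R).comp (continuous_fst (X := ℝ) (Y := ℝ))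
      have h2 := (continuous_circleMap 0 r).comp (continuous_snd (X := ℝ) (Y := ℝ))
      exact (h1.mul continuous_const).mul ((h2.mul continuous_const).mul hf)
    have : MeasureTheory.IntegrableOn (Function.uncurry fun θ φ : ℝ => circleMap 0 R θ * Complex.I *
        (circleMap 0 r φ * Complex.I * f (circleMap 0 R θ) (circleMap 0 r φ)))
        (Set.Icc 0 (2 * Real.pi) ×ˢ Set.Icc 0 (2 * Real.pi)) :=
      hc.continuousOn.integrableOn_compact (isCompact_Icc.prod isCompact_Icc)
    exact this.mono_set (Set.prod_mono Set.Ioc_subset_Icc_self Set.Ioc_subset_Icc_self)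

lemma circle_inv (f : ℂ → ℂ) (R : ℝ) (hR : 0 < R) :
    (∮ w in C((0 : ℂ), R⁻¹), f w) = ∮ z in C((0 : ℂ), R), f z⁻¹ * z ^ (-2 : ℤ) := by
  simp only [circleIntegral, deriv_circleMap, smul_eq_mul]
  have hinv : ∀ θ : ℝ, (circleMap 0 R (2 * Real.pi - θ))⁻¹ = circleMap 0 R⁻¹ θ := by
    intro θ
    simp only [circleMap, zero_add, mul_inv, ← Complex.exp_neg]
    push_cast
    congr 1
    rw [show -((2 * (Real.pi : ℂ) - θ) * Complex.I) = θ * Complex.I - 2 * Real.pi * Complex.I by ring]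
    rw [Complex.exp_sub, Complex.exp_two_pi_mul_I, div_one]
  have := intervalIntegral.integral_comp_sub_left (a := 0) (b := 2 * Real.pi)
    (fun θ : ℝ => circleMap 0 R θ * Complex.I *
      (f (circleMap 0 R θ)⁻¹ * (circleMap 0 R θ) ^ (-2 : ℤ))) (2 * Real.pi)
  rw [sub_self, sub_zero] at this
  rw [← this]
  refine intervalIntegral.integral_congr fun θ _ => ?_
  have h0 : circleMap 0 R (2 * Real.pi - θ) ≠ 0 := circleMap_ne_center hR.ne'
  rw [← hinv]
  generalize circleMap 0 R (2 * Real.pi - θ) = z at *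
  rw [show (-2 : ℤ) = -(2 : ℕ) by rfl, zpow_neg, zpow_natCast]
  field_simp

lemma bJ_inv (N : ℤ) (s : ℝ) :
    (∮ w in C((0 : ℂ), 1 / 2), Complex.exp (-(s * (w - w⁻¹))) * w ^ (N - 1)) = bJ N s := by
  rw [one_div, circle_inv _ 2 two_pos, bJ]
  refine circleIntegral.integral_congr (by norm_num) fun z hz => ?_
  have hz0 : z ≠ 0 := by
    rintro rfl
    simp at hz
  simp only [inv_inv]
  rw [inv_zpow', mul_assoc, ← zpow_add₀ hz0]
  congr 2 <;> ring

lemma hasDerivAt_pfun (s : ℂ) (m : ℤ) (z : ℂ) (hz : z ≠ 0) :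
    HasDerivAt (fun z : ℂ => Complex.exp (s * (z - z⁻¹)) * z ^ m)
      ((s * (z + z⁻¹) + m) * z⁻¹ * (Complex.exp (s * (z - z⁻¹)) * z ^ m)) z := by
  have h1 : HasDerivAt (fun z : ℂ => s * (z - z⁻¹)) (s * (1 - -(z ^ 2)⁻¹)) z :=
    ((hasDerivAt_id z).sub (hasDerivAt_inv hz)).const_mul s
  have h2 := h1.cexp.mul (hasDerivAt_zpow m z (Or.inl hz))
  refine h2.congr_deriv ?_
  rw [zpow_sub_one₀ hz]
  field_simp
  ring

lemma circle_lin (c : ℂ) (f g h : ℂ → ℂ) (R : ℝ) (hf : CircleIntegrable f 0 R)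
    (hg : CircleIntegrable g 0 R) (hh : CircleIntegrable h 0 R) :
    (∮ z in C((0 : ℂ), R), (c * f z - g z - h z))
      = c * (∮ z in C((0 : ℂ), R), f z) - (∮ z in C((0 : ℂ), R), g z)
        - ∮ z in C((0 : ℂ), R), h z := by
  have hf' : CircleIntegrable (fun z => c * f z) 0 R := hf.const_smul (a := c)
  have hfg : CircleIntegrable (fun z => c * f z - g z) 0 R := hf'.sub hg
  rw [circleIntegral.integral_sub hfg hh, circleIntegral.integral_sub hf' hg,
    circleIntegral.integral_const_mul]

set_option maxHeartbeats 2000000 in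
lemma cd_formula (a b : ℤ) (s : ℝ) :
    ((a : ℂ) - b) * (∮ z in C((0 : ℂ), 2), ∮ w in C((0 : ℂ), 1 / 2),
      Complex.exp ((s : ℂ) * (z - z⁻¹ - w + w⁻¹)) / ((z - w) * z ^ (a + 1) * w ^ (-b)))
    = s * (bJ a s * bJ (b + 1) s - bJ (a + 1) s * bJ b s) := by
  set p : ℂ → ℂ := fun z => Complex.exp (s * (z - z⁻¹)) * z ^ (-a) with hp
  set q : ℂ → ℂ := fun w => Complex.exp (-s * (w - w⁻¹)) * w ^ (b + 1) with hq
  set p' : ℂ → ℂ := fun z => (s * (z + z⁻¹) + (-a : ℤ)) * z⁻¹ * p z with hp'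
  set q' : ℂ → ℂ := fun w => (-s * (w + w⁻¹) + (b + 1 : ℤ)) * w⁻¹ * q w with hq'
  have dp : ∀ z, z ≠ 0 → HasDerivAt p (p' z) z := fun z hz => hasDerivAt_pfun s (-a) z hz
  have dq : ∀ w, w ≠ 0 → HasDerivAt q (q' w) w := fun w hw => hasDerivAt_pfun (-s) (b + 1) w hw
  have hz2 : ∀ z ∈ Metric.sphere (0 : ℂ) 2, z ≠ 0 := by
    rintro z hz rfl
    simp at hz
  have hw2 : ∀ z ∈ Metric.sphere (0 : ℂ) (1 / 2), z ≠ 0 := by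
    rintro z hz rfl
    simp at hz
  have hzw : ∀ z ∈ Metric.sphere (0 : ℂ) 2, ∀ w ∈ Metric.sphere (0 : ℂ) (1 / 2), z - w ≠ 0 := by
    intro z hz w hw h
    rw [sub_eq_zero] at h
    subst h
    simp at hz hw
    rw [hz] at hw
    norm_num at hw
  have mz : ∀ θ, circleMap 0 2 θ ∈ Metric.sphere (0 : ℂ) 2 :=
    fun θ => circleMap_mem_sphere 0 (by norm_num) θ
  have mw : ∀ θ, circleMap 0 (1 / 2) θ ∈ Metric.sphere (0 : ℂ) (1 / 2) :=
    fun θ => circleMap_mem_sphere 0 (by norm_num) θ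
  -- the three two-variable functions
  set F : ℂ → ℂ → ℂ := fun z w => p z * q w * (z - w)⁻¹ * (z⁻¹ * w⁻¹) with hF
  set G1 : ℂ → ℂ → ℂ := fun z w => (p' z * q w * (z - w)⁻¹ - p z * q w * ((z - w)⁻¹) ^ 2) * w⁻¹ with hG1
  set G2 : ℂ → ℂ → ℂ := fun z w => (p z * q' w * (z - w)⁻¹ + p z * q w * ((z - w)⁻¹) ^ 2) * z⁻¹ with hG2
  set H : ℂ → ℂ → ℂ := fun z w => p z * q w * (z⁻¹ * w⁻¹) * (1 - z⁻¹ * w⁻¹) with hH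
  have alg : ∀ z ∈ Metric.sphere (0 : ℂ) 2, ∀ w ∈ Metric.sphere (0 : ℂ) (1 / 2),
      ((a : ℂ) - b) * F z w = s * H z w - G1 z w - G2 z w := by
    intro z hz w hw
    have h1 := hz2 z hz
    have h2 := hw2 w hw
    have h3 := hzw z hz w hw
    simp only [hF, hG1, hG2, hH, hp', hq']
    generalize p z = P
    generalize q w = Q
    push_cast
    field_simp
    ring
  -- continuity
  have cinvz : Continuous fun θ : ℝ => (circleMap 0 2 θ)⁻¹ :=
    (continuous_circleMap 0 2).inv₀ fun θ => hz2 _ (mz θ)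
  have cinvw : Continuous fun θ : ℝ => (circleMap 0 (1 / 2) θ)⁻¹ :=
    (continuous_circleMap 0 (1 / 2)).inv₀ fun θ => hw2 _ (mw θ)
  have cz := continuous_circleMap 0 2
  have cw := continuous_circleMap 0 (1 / 2)
  have cp : Continuous fun θ : ℝ => p (circleMap 0 2 θ) := by
    rw [continuous_iff_continuousAt]
    intro θ
    exact ((dp _ (hz2 _ (mz θ))).continuousAt).comp cz.continuousAt
  have cq : Continuous fun θ : ℝ => q (circleMap 0 (1 / 2) θ) := by
    rw [continuous_iff_continuousAt]
    intro θ
    exact ((dq _ (hw2 _ (mw θ))).continuousAt).comp cw.continuousAt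
  have cp' : Continuous fun θ : ℝ => p' (circleMap 0 2 θ) :=
    (((continuous_const.mul (cz.add cinvz)).add continuous_const).mul cinvz).mul cp
  have cq' : Continuous fun θ : ℝ => q' (circleMap 0 (1 / 2) θ) :=
    (((continuous_const.mul (cw.add cinvw)).add continuous_const).mul cinvw).mul cq
  have Cp := cp.comp (continuous_fst (X := ℝ) (Y := ℝ))
  have Cp' := cp'.comp (continuous_fst (X := ℝ) (Y := ℝ))
  have Cz := cz.comp (continuous_fst (X := ℝ) (Y := ℝ))
  have Ciz := cinvz.comp (continuous_fst (X := ℝ) (Y := ℝ))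
  have Cq := cq.comp (continuous_snd (X := ℝ) (Y := ℝ))
  have Cq' := cq'.comp (continuous_snd (X := ℝ) (Y := ℝ))
  have Cw := cw.comp (continuous_snd (X := ℝ) (Y := ℝ))
  have Ciw := cinvw.comp (continuous_snd (X := ℝ) (Y := ℝ))
  have csub : Continuous fun t : ℝ × ℝ => (circleMap 0 2 t.1 - circleMap 0 (1 / 2) t.2)⁻¹ :=
    Continuous.inv₀ (Cz.sub Cw) fun t => hzw _ (mz _) _ (mw _)
  have cF : Continuous fun t : ℝ × ℝ => F (circleMap 0 2 t.1) (circleMap 0 (1 / 2) t.2) :=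
    ((Cp.mul Cq).mul csub).mul (Ciz.mul Ciw)
  have cG1 : Continuous fun t : ℝ × ℝ => G1 (circleMap 0 2 t.1) (circleMap 0 (1 / 2) t.2) :=
    (((Cp'.mul Cq).mul csub).sub ((Cp.mul Cq).mul (csub.pow 2))).mul Ciw
  have cG2 : Continuous fun t : ℝ × ℝ => G2 (circleMap 0 2 t.1) (circleMap 0 (1 / 2) t.2) :=
    (((Cp.mul Cq').mul csub).add ((Cp.mul Cq).mul (csub.pow 2))).mul Ciz
  have cH : Continuous fun t : ℝ × ℝ => H (circleMap 0 2 t.1) (circleMap 0 (1 / 2) t.2) :=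
    ((Cp.mul Cq).mul (Ciz.mul Ciw)).mul (continuous_const.sub (Ciz.mul Ciw))
  -- generic integrability
  have int_in : ∀ f : ℂ → ℂ → ℂ,
      (Continuous fun t : ℝ × ℝ => f (circleMap 0 2 t.1) (circleMap 0 (1 / 2) t.2)) →
      ∀ z ∈ Metric.sphere (0 : ℂ) 2, CircleIntegrable (fun w => f z w) 0 (1 / 2) := by
    intro f hf z hz
    rw [← abs_of_pos (show (0 : ℝ) < 2 by norm_num), ← range_circleMap] at hz
    obtain ⟨θ, rfl⟩ := hz
    exact (hf.comp (Continuous.prodMk_right θ)).intervalIntegrable _ _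
  have int_out : ∀ f : ℂ → ℂ → ℂ,
      (Continuous fun t : ℝ × ℝ => f (circleMap 0 2 t.1) (circleMap 0 (1 / 2) t.2)) →
      CircleIntegrable (fun z => ∮ w in C((0 : ℂ), 1 / 2), f z w) 0 2 := by
    intro f hf
    unfold CircleIntegrable
    refine Continuous.intervalIntegrable ?_ _ _
    simp only [circleIntegral, deriv_circleMap, smul_eq_mul]
    refine intervalIntegral.continuous_parametric_intervalIntegral_of_continuous' ?_ _ _
    exact (Cw.mul continuous_const).mul hf
  -- vanishing integrals
  have z1 : (∮ z in C((0 : ℂ), 2), ∮ w in C((0 : ℂ), 1 / 2), G1 z w) = 0 := by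
    rw [circle_swap _ _ _ cG1]
    have : ∀ w ∈ Metric.sphere (0 : ℂ) (1 / 2), (∮ z in C((0 : ℂ), 2), G1 z w) = 0 := by
      intro w hw
      refine circleIntegral.integral_eq_zero_of_hasDerivWithinAt (by norm_num)
        (f := fun z => p z * q w * (z - w)⁻¹ * w⁻¹) fun z hz => ?_
      have d1 : HasDerivAt (fun z => (z - w)⁻¹) (-1 / (z - w) ^ 2) z :=
        ((hasDerivAt_id z).sub_const w).inv (hzw z hz w hw)
      have d2 := (((dp z (hz2 z hz)).mul_const (q w)).mul d1).mul_const w⁻¹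
      refine (d2.congr_deriv ?_).hasDerivWithinAt
      simp only [hG1]
      have h3 := hzw z hz w hw
      field_simp
      ring
    rw [circleIntegral.integral_congr (by norm_num) (g := fun _ => 0) this]
    simp [circleIntegral]
  have z2 : (∮ z in C((0 : ℂ), 2), ∮ w in C((0 : ℂ), 1 / 2), G2 z w) = 0 := by
    have : ∀ z ∈ Metric.sphere (0 : ℂ) 2, (∮ w in C((0 : ℂ), 1 / 2), G2 z w) = 0 := by
      intro z hz
      refine circleIntegral.integral_eq_zero_of_hasDerivWithinAt (by norm_num)
        (f := fun w => p z * q w * (z - w)⁻¹ * z⁻¹) fun w hw => ?_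
      have d1 : HasDerivAt (fun w => (z - w)⁻¹) (-(-1) / (z - w) ^ 2) w :=
        ((hasDerivAt_id w).const_sub z).inv (hzw z hz w hw)
      have d2 := (((dq w (hw2 w hw)).const_mul (p z)).mul d1).mul_const z⁻¹
      refine (d2.congr_deriv ?_).hasDerivWithinAt
      simp only [hG2]
      have h3 := hzw z hz w hw
      field_simp
    rw [circleIntegral.integral_congr (by norm_num) (g := fun _ => 0) this]
    simp [circleIntegral]
  -- the main identity
  have e0 : (∮ z in C((0 : ℂ), 2), ∮ w in C((0 : ℂ), 1 / 2),
      Complex.exp ((s : ℂ) * (z - z⁻¹ - w + w⁻¹)) / ((z - w) * z ^ (a + 1) * w ^ (-b)))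
      = ∮ z in C((0 : ℂ), 2), ∮ w in C((0 : ℂ), 1 / 2), F z w := by
    refine circleIntegral.integral_congr (by norm_num) fun z hz => ?_
    refine circleIntegral.integral_congr (by norm_num) fun w hw => ?_
    have h1 := hz2 z hz
    have h2 := hw2 w hw
    have h3 := hzw z hz w hw
    simp only [hF, hp, hq]
    rw [show (s : ℂ) * (z - z⁻¹ - w + w⁻¹) = s * (z - z⁻¹) + -s * (w - w⁻¹) by ring,
      Complex.exp_add, zpow_add_one₀ h1, zpow_neg, zpow_neg, zpow_add_one₀ h2]
    have h4 := zpow_ne_zero a h1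
    have h5 := zpow_ne_zero b h2
    field_simp
  have e1 : ((a : ℂ) - b) * (∮ z in C((0 : ℂ), 2), ∮ w in C((0 : ℂ), 1 / 2), F z w)
      = s * ∮ z in C((0 : ℂ), 2), ∮ w in C((0 : ℂ), 1 / 2), H z w := by
    calc ((a : ℂ) - b) * (∮ z in C((0 : ℂ), 2), ∮ w in C((0 : ℂ), 1 / 2), F z w)
        = ∮ z in C((0 : ℂ), 2), (((a : ℂ) - b) * ∮ w in C((0 : ℂ), 1 / 2), F z w) := by
          rw [circleIntegral.integral_const_mul]
      _ = ∮ z in C((0 : ℂ), 2), ((s * (∮ w in C((0 : ℂ), 1 / 2), H z w)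
            - ∮ w in C((0 : ℂ), 1 / 2), G1 z w) - ∮ w in C((0 : ℂ), 1 / 2), G2 z w) := by
          refine circleIntegral.integral_congr (by norm_num) fun z hz => ?_
          change ((a : ℂ) - b) * (∮ w in C((0 : ℂ), 1 / 2), F z w) =
            s * (∮ w in C((0 : ℂ), 1 / 2), H z w)
              - (∮ w in C((0 : ℂ), 1 / 2), G1 z w) - ∮ w in C((0 : ℂ), 1 / 2), G2 z w
          rw [← circleIntegral.integral_const_mul, ← circle_lin _ _ _ _ _ (int_in H cH z hz)
            (int_in G1 cG1 z hz) (int_in G2 cG2 z hz)]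
          exact circleIntegral.integral_congr (by norm_num) fun w hw => alg z hz w hw
      _ = _ := by
          rw [circle_lin _ _ _ _ _ (int_out H cH) (int_out G1 cG1) (int_out G2 cG2), z1, z2]
          ring
  rw [e0, e1]
  congr 1
  -- factor the double integral of `H`
  have f1 : ∀ z ∈ Metric.sphere (0 : ℂ) 2, (∮ w in C((0 : ℂ), 1 / 2), H z w)
      = bJ (b + 1) s * (Complex.exp (s * (z - z⁻¹)) * z ^ (-a - 1))
        - bJ b s * (Complex.exp (s * (z - z⁻¹)) * z ^ (-(a + 1) - 1)) := by
    intro z hz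
    have h1 := hz2 z hz
    rw [mul_comm, mul_comm (bJ b s), ← bJ_inv, ← bJ_inv, ← circleIntegral.integral_const_mul, ← circleIntegral.integral_const_mul,
      ← circleIntegral.integral_sub]
    · refine circleIntegral.integral_congr (by norm_num) fun w hw => ?_
      have h2 := hw2 w hw
      simp only [hH, hp, hq]
      rw [show b + 1 - 1 = b by ring, zpow_sub_one₀ h1, show -(a + 1) - 1 = -a - 1 - 1 by ring,
        zpow_sub_one₀ h1, zpow_sub_one₀ h1, zpow_sub_one₀ h2, zpow_add_one₀ h2, neg_mul]
      field_simp
    all_goals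
      refine ContinuousOn.circleIntegrable (by norm_num) fun w hw => ?_
      have := fun m => (hasDerivAt_pfun (-s) m w (hw2 w hw)).continuousAt
      simp only [neg_mul] at this
      exact (continuousAt_const.mul (this _)).continuousWithinAt
  rw [circleIntegral.integral_congr (by norm_num) f1, circleIntegral.integral_sub]
  · rw [circleIntegral.integral_const_mul, circleIntegral.integral_const_mul]
    rw [← bJ, ← bJ]
    ring
  all_goals
    refine ContinuousOn.circleIntegrable (by norm_num) fun w hw => ?_
    have := fun m => (hasDerivAt_pfun s m w (hz2 w hw)).continuousAt
    exact (continuousAt_const.mul (this _)).continuousWithinAt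

/-- Edge asymptotics of the discrete Bessel kernel: the Airy kernel.
Half-integers `aₙ + 1/2`, `bₙ + 1/2` are encoded by the integers `aₙ`, `bₙ`. -/
theorem besselKernel_tendsto_airy_kernel
    (x y : ℝ) (hxy : x ≠ y)
    (ξ : ℕ → ℝ) (hpos : ∀ n, 0 < ξ n) (hξ : Tendsto ξ atTop atTop)
    (a b : ℕ → ℤ)
    (ha : Tendsto
      (fun n => ((a n : ℝ) + 1/2 - 2 * Real.sqrt (ξ n)) / (ξ n) ^ ((1 : ℝ) / 6))
      atTop (𝓝 x))
    (hb : Tendsto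
      (fun n => ((b n : ℝ) + 1/2 - 2 * Real.sqrt (ξ n)) / (ξ n) ^ ((1 : ℝ) / 6))
      atTop (𝓝 y)) :
    Tendsto
      (fun n => (((ξ n) ^ ((1 : ℝ) / 6) : ℝ) : ℂ) * besselKernel (a n) (b n) (ξ n))
      atTop (𝓝 ((KAiry x y : ℝ) : ℂ)) := by
  set L : ℕ → ℝ := fun n => ξ n ^ ((1 : ℝ) / 6) with hLdef
  have hLpos : ∀ n, 0 < L n := fun n => Real.rpow_pos_of_pos (hpos n) _
  have hL : Tendsto L atTop atTop := (tendsto_rpow_atTop (by norm_num)).comp hξ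
  have hs : ∀ n, Real.sqrt (ξ n) = L n ^ 3 := by
    intro n
    rw [Real.sqrt_eq_rpow, hLdef]
    simp only
    rw [← Real.rpow_natCast, ← Real.rpow_mul (hpos n).le]
    norm_num
  have hinv : Tendsto (fun n => (1 / 2 : ℝ) * (L n)⁻¹) atTop (𝓝 0) := by
    simpa using (tendsto_inv_atTop_zero.comp hL).const_mul (1 / 2 : ℝ)
  have shift : ∀ (c : ℕ → ℤ) (t : ℝ),
      Tendsto (fun n => ((c n : ℝ) + 1/2 - 2 * Real.sqrt (ξ n)) / L n) atTop (𝓝 t) →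
      Tendsto (fun n => ((c n : ℝ) - 2 * L n ^ 3) / L n) atTop (𝓝 t) := by
    intro c t h
    have := h.sub hinv
    rw [sub_zero] at this
    refine this.congr fun n => ?_
    rw [hs n]
    have := (hLpos n).ne'
    field_simp
    ring
  have ha' := shift a x ha
  have hb' := shift b y hb
  have hab : Tendsto (fun n => (((((a n : ℝ) - b n) / L n : ℝ)) : ℂ)) atTop (𝓝 ((x : ℂ) - y)) := by
    have h1 : Tendsto (fun n => ((a n : ℝ) - b n) / L n) atTop (𝓝 (x - y)) := by
      refine (ha'.sub hb').congr fun n => ?_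
      ring
    have := (Complex.continuous_ofReal.tendsto _).comp h1
    rw [Complex.ofReal_sub] at this
    exact this
  have hxy' : (x : ℂ) - y ≠ 0 := by
    rw [sub_ne_zero]
    exact_mod_cast hxy
  have key := (((bJ_limit L a x hL ha').mul (dbJ_limit L b y hL hb')).sub
    ((dbJ_limit L a x hL ha').mul (bJ_limit L b y hL hb'))).div hab hxy'
  have hK : ((KAiry x y : ℝ) : ℂ) = ((Ai x : ℝ) * (deriv Ai y : ℝ) - (deriv Ai x : ℝ) * (Ai y : ℝ) : ℂ)
      / ((x : ℂ) - y) := by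
    unfold KAiry
    rw [if_neg hxy]
    push_cast
    rfl
  rw [hK]
  refine key.congr' ?_
  filter_upwards [hab.eventually_ne hxy'] with n hn
  have hLc : (L n : ℂ) ≠ 0 := by exact_mod_cast (hLpos n).ne'
  have hne : (a n : ℂ) - b n ≠ 0 := by
    intro h
    apply hn
    push_cast
    rw [h, zero_div]
  have hcd := cd_formula (a n) (b n) (L n ^ 3)
  have hcd' := eq_div_of_mul_eq hne ((mul_comm _ _).trans hcd)
  rw [Pi.div_apply]
  change _ = (L n : ℂ) * besselKernel (a n) (b n) (ξ n)
  simp only [besselKernel]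
  rw [hs n, hcd']
  push_cast
  field_simp
  ring
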